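/- For every u ∈ δ ∩ ℤ^n, the sum A_u = Σ γ_l · a_j^{p^l}, taken over all pairs (j, l) with 1 ≤ j ≤ N, l ≥ 0 and p^l·w_j = u (a finite set, since w_j ≠ 0), satisfies ord(A_u) ≥ w(u)/(p−1). (This expresses that the formal Laurent series H(x) = Σ_{j=1}^N h(a_j x^{w_j}), where h(t) = Σ_{l≥0} γ_l t^{p^l}, lies in the space L(1/(p−1), 0) of series Σ_u A_u x^u with ord(A_u) ≥ w(u)/(p−1).) -/

import Mathlib

/-!
Since the full series `∑ γ^{p^i}/p^i` vanishes, `γ_l` is minus its tail, whose terms have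
`ord = p^i/(p-1) - i` with `i > l`. As `p^i - p^l ≥ p^i - p^{i-1} = (p-1) p^{i-1} ≥ (p-1) i`,
each of them has `ord ≥ p^l/(p-1)`, so `ord γ_l ≥ p^l/(p-1)` (`norm_gammaPartial_le`).
If `p^l w_j = u` then `u ∈ p^l • Δ`, so `w(u) ≤ p^l` (`weight_le`). Each summand of `A_u` thus has
`ord ≥ w(u)/(p-1)`, and the ultrametric inequality finishes the proof. Valuation bounds are
handled as bounds on norms: `ord x ≥ c` means `‖x‖ ≤ p^{-c}` (`le_ord_iff`).
-/

open Pointwise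

/-- The real vector associated to an integer lattice vector. -/
def intToReal (n : ℕ) (u : Fin n → ℤ) : Fin n → ℝ := fun i => (u i : ℝ)

/-- The convex cone `δ` generated by `w₁, …, w_N`. -/
def deltaCone (n N : ℕ) (w : Fin N → Fin n → ℤ) : Set (Fin n → ℝ) :=
  {x | ∃ c : Fin N → ℝ, (∀ j, 0 ≤ c j) ∧ x = ∑ j, c j • intToReal n (w j)}

/-- The Newton polyhedron `Δ`: the convex hull of `{w₁, …, w_N} ∪ {0}`. -/
def newtonPolyhedron (n N : ℕ) (w : Fin N → Fin n → ℤ) : Set (Fin n → ℝ) :=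
  convexHull ℝ (insert 0 (Set.range fun j => intToReal n (w j)))

/-- The weight function `w(u) = inf {c : 0 ≤ c ∧ u ∈ c • Δ}`. -/
noncomputable def weight (n N : ℕ) (w : Fin N → Fin n → ℤ) (u : Fin n → ℝ) : ℝ :=
  sInf {c : ℝ | 0 ≤ c ∧ u ∈ c • newtonPolyhedron n N w}

/-- The set `S` of lattice points of the form `∑ rⱼ wⱼ` with `0 ≤ rⱼ ≤ 1`. -/
def latticeS (n N : ℕ) (w : Fin N → Fin n → ℤ) : Set (Fin n → ℤ) :=
  {s | ∃ r : Fin N → ℝ, (∀ j, 0 ≤ r j ∧ r j ≤ 1) ∧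
    intToReal n s = ∑ j, r j • intToReal n (w j)}

open scoped Classical

/-- The additive valuation `ord x = -log_p ‖x‖`, with `ord 0 = +∞`, valued in `EReal`. -/
noncomputable def ord (p : ℕ) {K : Type*} [NormedField K] (x : K) : EReal :=
  if x = 0 then ⊤ else ((-Real.logb p ‖x‖ : ℝ) : EReal)

/-- The partial sum `γ_l = ∑_{i=0}^l γ^{p^i} / p^i`. -/
noncomputable def gammaPartial (p : ℕ) {K : Type*} [NormedField K] (γ : K) (l : ℕ) : K :=
  ∑ i ∈ Finset.range (l + 1), γ ^ p ^ i / (p : K) ^ i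

lemma le_ord_iff {p : ℕ} (hp : 1 < p) {K : Type*} [NormedField K] (x : K) (c : ℝ) :
    ((c : ℝ) : EReal) ≤ ord p x ↔ ‖x‖ ≤ (p : ℝ) ^ (-c) := by
  have hp' : (1 : ℝ) < p := by exact_mod_cast hp
  unfold ord
  split_ifs with h
  · subst h
    simp only [le_top, norm_zero, true_iff]
    positivity
  · rw [EReal.coe_le_coe_iff, le_neg, Real.logb_le_iff_le_rpow hp' (norm_pos_iff.2 h)]

/-- The elementary inequality `i + p^l/(p-1) ≤ p^i/(p-1)` for `i > l`, cleared of denominators. -/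
lemma mul_add_pow_le_pow {p : ℕ} (hp : 1 < p) {l i : ℕ} (h : l < i) :
    ((p : ℝ) - 1) * i + (p : ℝ) ^ l ≤ (p : ℝ) ^ i := by
  have hp' : (1 : ℝ) < p := by exact_mod_cast hp
  obtain ⟨k, rfl⟩ : ∃ k, i = k + 1 := ⟨i - 1, by omega⟩
  have h1 : (p : ℝ) ^ l ≤ (p : ℝ) ^ k := pow_le_pow_right₀ hp'.le (by omega)
  have h2 : ((k + 1 : ℕ) : ℝ) ≤ (p : ℝ) ^ k := by
    exact_mod_cast Nat.lt_pow_self hp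
  rw [pow_succ]
  nlinarith

lemma norm_term_le {p : ℕ} (hp : 1 < p) {K : Type*} [NormedField K]
    (hpnorm : ‖(p : K)‖ = (p : ℝ)⁻¹) {γ : K} (hγ : ‖γ‖ ≤ (p : ℝ) ^ (-(1 / ((p : ℝ) - 1))))
    {l i : ℕ} (h : l < i) :
    ‖γ ^ p ^ i / (p : K) ^ i‖ ≤ (p : ℝ) ^ (-((p : ℝ) ^ l / ((p : ℝ) - 1))) := by
  have hp' : (1 : ℝ) < p := by exact_mod_cast hp
  have hp0 : (0 : ℝ) < p := by linarith
  rw [norm_div, norm_pow, norm_pow, hpnorm, inv_pow, div_inv_eq_mul]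
  calc ‖γ‖ ^ p ^ i * (p : ℝ) ^ i
      ≤ ((p : ℝ) ^ (-(1 / ((p : ℝ) - 1)))) ^ p ^ i * (p : ℝ) ^ i := by gcongr
    _ = (p : ℝ) ^ (-(1 / ((p : ℝ) - 1)) * (p : ℝ) ^ i + i) := by
      rw [Real.rpow_add hp0, Real.rpow_natCast, ← Real.rpow_natCast (_ ^ _), ← Real.rpow_mul hp0.le]
      push_cast
      rfl
    _ ≤ _ := by
      apply Real.rpow_le_rpow_of_exponent_le hp'.le
      have h1 := mul_add_pow_le_pow hp h
      have h2 : (0 : ℝ) < p - 1 := by linarith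
      have h3 : (i : ℝ) + (p : ℝ) ^ l / (p - 1) ≤ (p : ℝ) ^ i / (p - 1) := by
        rw [le_div_iff₀ h2, add_mul, div_mul_cancel₀ _ h2.ne']
        linarith
      have h4 : -(1 / ((p : ℝ) - 1)) * (p : ℝ) ^ i = -((p : ℝ) ^ i / (p - 1)) := by ring
      linarith

lemma norm_gammaPartial_le {p : ℕ} (hp : 1 < p) {K : Type*} [NormedField K] [IsUltrametricDist K]
    (hpnorm : ‖(p : K)‖ = (p : ℝ)⁻¹) {γ : K} (hγ : ‖γ‖ ≤ (p : ℝ) ^ (-(1 / ((p : ℝ) - 1))))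
    (hsum : HasSum (fun i : ℕ => γ ^ p ^ i / (p : K) ^ i) 0) (l : ℕ) :
    ‖gammaPartial p γ l‖ ≤ (p : ℝ) ^ (-((p : ℝ) ^ l / ((p : ℝ) - 1))) := by
  have htail := (hasSum_nat_add_iff' (l + 1)).2 hsum
  rw [zero_sub] at htail
  rw [gammaPartial, ← norm_neg]
  refine le_of_tendsto htail.norm (Filter.Eventually.of_forall fun s => ?_)
  exact IsUltrametricDist.norm_sum_le_of_forall_le_of_nonneg (by positivity)
    fun i _ => norm_term_le hp hpnorm hγ (by omega)

lemma weight_le {n N : ℕ} {w : Fin N → Fin n → ℤ} {u : Fin n → ℤ} {p l : ℕ} {j : Fin N}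
    (h : (p ^ l : ℤ) • w j = u) : weight n N w (intToReal n u) ≤ (p : ℝ) ^ l := by
  refine csInf_le ⟨0, fun c hc => hc.1⟩ ⟨by positivity, intToReal n (w j), ?_, ?_⟩
  · exact subset_convexHull ℝ _ (Set.mem_insert_of_mem _ ⟨j, rfl⟩)
  · subst h
    ext i
    simp [intToReal]

lemma finite_pairs {p : ℕ} (hp : 1 < p) {n N : ℕ} {w : Fin N → Fin n → ℤ} (hw : ∀ j, w j ≠ 0)
    (u : Fin n → ℤ) : {jl : Fin N × ℕ | (p ^ jl.2 : ℤ) • w jl.1 = u}.Finite := by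
  -- `w j ≠ 0` makes `l` a function of `j`, so the first projection is injective on this set.
  refine Set.Finite.of_finite_image (f := Prod.fst) (Set.toFinite _) ?_
  rintro ⟨j, l⟩ h ⟨j', m⟩ h' (rfl : j = j')
  have e : (p ^ l : ℤ) = (p ^ m : ℤ) :=
    smul_left_injective ℤ (hw j) (Eq.trans h (Eq.symm h'))
  rw [Nat.pow_right_injective hp (by exact_mod_cast e : p ^ l = p ^ m)]

/-- the formal Laurent series `H(x) = ∑_j h(a_j x^{w_j})`, where
`h(t) = ∑_{l≥0} γ_l t^{p^l}`, lies in `L(1/(p-1), 0)`: for every `u ∈ δ ∩ ℤ^n`,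
the coefficient `A_u = ∑_{(j,l) : p^l·w_j = u} γ_l · a_j^{p^l}` (a sum over a
finite set, since all `w_j ≠ 0`) satisfies `ord(A_u) ≥ w(u)/(p-1)`. -/
theorem H_mem_L (p : ℕ) (hp : p.Prime)
    {K : Type*} [NormedField K] [CompleteSpace K] [CharZero K]
    (hna : ∀ x y : K, ‖x + y‖ ≤ max ‖x‖ ‖y‖)
    (hpnorm : ‖(p : K)‖ = (p : ℝ)⁻¹)
    (γ : K) (hγ : ord p γ = ((1 / ((p : ℝ) - 1) : ℝ) : EReal))
    (hsum : HasSum (fun i : ℕ => γ ^ p ^ i / (p : K) ^ i) 0)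
    (n N : ℕ) (hn : 1 ≤ n) (w : Fin N → Fin n → ℤ) (hw : ∀ j, w j ≠ 0)
    (a : Fin N → K) (ha : ∀ j, (0 : EReal) ≤ ord p (a j))
    (u : Fin n → ℤ) (hu : intToReal n u ∈ deltaCone n N w) :
    ∃ hfin : {jl : Fin N × ℕ | (p ^ jl.2 : ℤ) • w jl.1 = u}.Finite,
      ((weight n N w (intToReal n u) / ((p : ℝ) - 1) : ℝ) : EReal) ≤
        ord p (∑ jl ∈ hfin.toFinset, gammaPartial p γ jl.2 * a jl.1 ^ p ^ jl.2) := by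
  have hp1 : 1 < p := hp.one_lt
  have hp' : (1 : ℝ) < p := by exact_mod_cast hp1
  have : IsUltrametricDist K :=
    IsUltrametricDist.isUltrametricDist_of_forall_norm_add_le_max_norm hna
  refine ⟨finite_pairs hp1 hw u, ?_⟩
  rw [le_ord_iff hp1]
  refine IsUltrametricDist.norm_sum_le_of_forall_le_of_nonneg (by positivity) ?_
  rintro ⟨j, l⟩ hjl
  have hjl' : (p ^ l : ℤ) • w j = u := by simpa using hjl
  have hγl := norm_gammaPartial_le hp1 hpnorm ((le_ord_iff hp1 γ _).1 hγ.ge) hsum l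
  have haj : ‖a j‖ ≤ 1 := by
    simpa using (le_ord_iff hp1 (a j) 0).1 (by simpa using ha j)
  rw [norm_mul, norm_pow]
  calc ‖gammaPartial p γ l‖ * ‖a j‖ ^ p ^ l
      ≤ ‖gammaPartial p γ l‖ * 1 := by
        gcongr
        exact pow_le_one₀ (norm_nonneg _) haj
    _ ≤ (p : ℝ) ^ (-((p : ℝ) ^ l / ((p : ℝ) - 1))) := by rwa [mul_one]
    _ ≤ _ := by
      apply Real.rpow_le_rpow_of_exponent_le hp'.le
      have := weight_le hjl'
      have h2 : (0 : ℝ) ≤ p - 1 := by linarith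
      gcongr
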